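/- arXiv:2111.07108 — 2 statements merged into one kernel-verified Lean document; each statement's English description precedes it below -/
import Mathlib

section
/- (Chern's lemma / Autonne–Takagi factorization) Let A be a symmetric n×n complex matrix (Aᵀ = A). Then there exist a unitary n×n matrix U and real numbers b₁ ≥ b₂ ≥ … ≥ bₙ ≥ 0 such that Uᵀ·A·U = diag(b₁, …, bₙ). Moreover, b₁², …, bₙ² are exactly the eigenvalues of the Hermitian positive semidefinite matrix A·Ā. -/
/-!
Takagi factorization is reduced to the simultaneous diagonalization of two commuting real symmetric
matrices. Diagonalize the Hermitian matrix `Aᴴ * A` by a unitary `V` and put `B = Vᵀ * A * V`.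
Then `B` is symmetric and `Bᴴ * B` is a real diagonal matrix. Writing `B = X + iY` with `X`, `Y`
real symmetric, the imaginary part of `Bᴴ * B` is `X * Y - Y * X`, so `X` and `Y` commute
(`exists_unitary_real_imag_commute`). A real orthogonal `Q` diagonalizes both
(`exists_orthogonal_diagonal_of_commute`), hence `Qᵀ * B * Q` is a complex diagonal matrix. A
diagonal unitary matrix holding square roots of the conjugate phases turns its entries into their
absolute values, and a permutation matrix sorts them.

For the eigenvalues, `Uᵀ * A * U = D` with `D` real gives `A = Ū * D * Uᴴ` and
`Ā = U * D * Uᵀ`, so `A * Ā = Ū * D² * Uᵀ` is similar to `D²`.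
-/

open Matrix

/-- Two commuting symmetric operators on an `n`-dimensional real inner product space have a common
orthonormal eigenbasis. -/
theorem exists_common_orthonormal_eigenbasis {E : Type*} [NormedAddCommGroup E]
    [InnerProductSpace ℝ E] [FiniteDimensional ℝ E] {n : ℕ} (hn : Module.finrank ℝ E = n)
    {S T : E →ₗ[ℝ] E} (hS : S.IsSymmetric) (hT : T.IsSymmetric) (hST : Commute S T) :
    ∃ (q : OrthonormalBasis (Fin n) ℝ E) (x y : Fin n → ℝ),
      ∀ i, S (q i) = x i • q i ∧ T (q i) = y i • q i := by
  classical
  have hint := LinearMap.IsSymmetric.directSum_isInternal_of_commute hS hT hST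
  have horth := LinearMap.IsSymmetric.orthogonalFamily_eigenspace_inf_eigenspace hS hT
  -- Subordinate bases need a finite index type, so only nonzero joint eigenspaces are kept.
  have hint' := DirectSum.isInternal_ne_bot_iff.mpr hint
  have horth' := horth.comp (γ := {i : ℝ × ℝ // Module.End.eigenspace S i.2 ⊓
    Module.End.eigenspace T i.1 ≠ ⊥}) Subtype.val_injective
  let := hint.submodule_iSupIndep.fintypeNeBotOfFiniteDimensional
  refine ⟨hint'.subordinateOrthonormalBasis hn horth',
    fun a => (hint'.subordinateOrthonormalBasisIndex hn a horth').1.2,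
    fun a => (hint'.subordinateOrthonormalBasisIndex hn a horth').1.1, fun a => ?_⟩
  have h := hint'.subordinateOrthonormalBasis_subordinate hn a horth'
  exact ⟨Module.End.mem_eigenspace_iff.mp h.1, Module.End.mem_eigenspace_iff.mp h.2⟩

theorem exists_orthogonal_diagonal_of_commute {n : ℕ} {X Y : Matrix (Fin n) (Fin n) ℝ}
    (hX : Xᵀ = X) (hY : Yᵀ = Y) (hXY : X * Y = Y * X) :
    ∃ (Q : Matrix (Fin n) (Fin n) ℝ) (x y : Fin n → ℝ),
      Qᵀ * Q = 1 ∧ Qᵀ * X * Q = diagonal x ∧ Qᵀ * Y * Q = diagonal y := by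
  have hS : (toEuclideanLin X).IsSymmetric := isSymmetric_toEuclideanLin_iff.mpr (by
    rw [IsHermitian, conjTranspose_eq_transpose_of_trivial, hX])
  have hT : (toEuclideanLin Y).IsSymmetric := isSymmetric_toEuclideanLin_iff.mpr (by
    rw [IsHermitian, conjTranspose_eq_transpose_of_trivial, hY])
  have hST : Commute (toEuclideanLin X) (toEuclideanLin Y) := by
    refine LinearMap.ext fun v => ?_
    simp [toLpLin_apply, mulVec_mulVec, hXY]
  obtain ⟨q, x, y, hq⟩ := exists_common_orthonormal_eigenbasis (n := n) (by simp) hS hT hST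
  set Q : Matrix (Fin n) (Fin n) ℝ := Matrix.of fun i j => q j i with hQ
  have hQQ : Qᵀ * Q = 1 := by
    ext i j
    have h := orthonormal_iff_ite.mp q.orthonormal i j
    rw [EuclideanSpace.inner_eq_star_dotProduct] at h
    simpa [Matrix.mul_apply, hQ, one_apply, dotProduct, mul_comm] using h
  have key : ∀ (Z : Matrix (Fin n) (Fin n) ℝ) (z : Fin n → ℝ),
      (∀ i, toEuclideanLin Z (q i) = z i • q i) → Qᵀ * Z * Q = diagonal z := by
    intro Z z hz
    have : Z * Q = Q * diagonal z := by
      ext i j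
      have h := congrArg (fun v : EuclideanSpace ℝ (Fin n) => v i) (hz j)
      simpa [Matrix.mul_apply, hQ, toLpLin_apply, mulVec, dotProduct, diagonal_apply, mul_comm]
        using h
    rw [Matrix.mul_assoc, this, ← Matrix.mul_assoc, hQQ, Matrix.one_mul]
  exact ⟨Q, x, y, hQQ, key X x fun i => (hq i).1, key Y y fun i => (hq i).2⟩

theorem exists_unitary_real_imag_commute {n : ℕ} (A : Matrix (Fin n) (Fin n) ℂ) (hA : Aᵀ = A) :
    ∃ (V : Matrix (Fin n) (Fin n) ℂ) (X Y : Matrix (Fin n) (Fin n) ℝ), Vᴴ * V = 1 ∧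
      Xᵀ = X ∧ Yᵀ = Y ∧ X * Y = Y * X ∧
      Vᵀ * A * V = X.map Complex.ofReal + Complex.I • Y.map Complex.ofReal := by
  have hH : (Aᴴ * A).IsHermitian := isHermitian_conjTranspose_mul_self A
  set V : Matrix (Fin n) (Fin n) ℂ := hH.eigenvectorUnitary.1 with hV
  have hVV : Vᴴ * V = 1 := Unitary.coe_star_mul_self hH.eigenvectorUnitary
  have hVV' : Vᵀᴴ * Vᵀ = 1 := by
    have h : V * Vᴴ = 1 := mul_eq_one_comm.mp hVV
    have h' := congrArg transpose h
    rw [transpose_mul, transpose_one] at h'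
    exact h'
  have hD : Vᴴ * (Aᴴ * A) * V = diagonal (fun i => (hH.eigenvalues i : ℂ)) := by
    have h := hH.conjStarAlgAut_star_eigenvectorUnitary
    rw [Unitary.conjStarAlgAut_star_apply] at h
    exact h
  set B := Vᵀ * A * V with hB
  have hBs : Bᵀ = B := by simp [hB, transpose_mul, hA, Matrix.mul_assoc]
  have hBB : Bᴴ * B = diagonal (fun i => (hH.eigenvalues i : ℂ)) := by
    rw [← hD, hB]
    calc (Vᵀ * A * V)ᴴ * (Vᵀ * A * V) = Vᴴ * Aᴴ * (Vᵀᴴ * Vᵀ) * A * V := by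
          simp only [conjTranspose_mul, Matrix.mul_assoc]
      _ = _ := by rw [hVV', Matrix.mul_one]; simp only [Matrix.mul_assoc]
  have hBs' : ∀ i j, B j i = B i j := fun i j => congrFun (congrFun hBs i) j
  refine ⟨V, B.map Complex.re, B.map Complex.im, hVV, ?_, ?_, ?_, ?_⟩
  · ext i j; simp [hBs' i j]
  · ext i j; simp [hBs' i j]
  · ext i j
    have h := congrArg Complex.im (congrFun (congrFun hBB i) j)
    have h0 : (diagonal (fun i => (hH.eigenvalues i : ℂ)) i j).im = 0 := by
      rw [diagonal_apply]; split_ifs <;> simp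
    rw [h0, Matrix.mul_apply, Complex.im_sum] at h
    simp only [conjTranspose_apply, hBs' i, Complex.mul_im, Complex.star_def, Complex.conj_re,
      Complex.conj_im, neg_mul, Finset.sum_add_distrib, Finset.sum_neg_distrib] at h
    simp only [Matrix.mul_apply, map_apply]
    linarith
  · ext i j
    simp [mul_comm Complex.I, Complex.re_add_im, hB]

/-- The factorization without the ordering of the diagonal entries. -/
theorem exists_takagi_unsorted {n : ℕ} (A : Matrix (Fin n) (Fin n) ℂ) (hA : Aᵀ = A) :
    ∃ (U : Matrix (Fin n) (Fin n) ℂ) (b : Fin n → ℝ), Uᴴ * U = 1 ∧ (∀ i, 0 ≤ b i) ∧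
      Uᵀ * A * U = diagonal (fun i => (b i : ℂ)) := by
  obtain ⟨V, X, Y, hV, hX, hY, hXY, hVA⟩ := exists_unitary_real_imag_commute A hA
  obtain ⟨Q, x, y, hQ, hQX, hQY⟩ := exists_orthogonal_diagonal_of_commute hX hY hXY
  set R : Matrix (Fin n) (Fin n) ℂ := Q.map Complex.ofRealHom with hR
  have hRH : Rᴴ = Rᵀ := by ext i j; simp [hR]
  have hRR : Rᵀ * R = 1 := by
    rw [hR, ← transpose_map, ← Matrix.map_mul, hQ]; simp
  have hmap : ∀ (Z : Matrix (Fin n) (Fin n) ℝ) (z : Fin n → ℝ), Qᵀ * Z * Q = diagonal z →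
      Rᵀ * Z.map Complex.ofRealHom * R = diagonal (fun i => (z i : ℂ)) := by
    intro Z z h
    rw [hR, ← transpose_map, ← Matrix.map_mul, ← Matrix.map_mul, h, diagonal_map (by simp)]
    rfl
  set d : Fin n → ℂ := fun i => x i + Complex.I * y i with hd
  have hRB : Rᵀ * (Vᵀ * A * V) * R = diagonal d := by
    have h1 : Rᵀ * X.map Complex.ofReal * R = _ := hmap X x hQX
    have h2 : Rᵀ * Y.map Complex.ofReal * R = _ := hmap Y y hQY
    rw [hVA, Matrix.mul_add, Matrix.add_mul, Matrix.mul_smul, Matrix.smul_mul, h1, h2,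
      ← diagonal_smul, diagonal_add]
    rfl
  -- `p i` is a unit complex number whose square is the conjugate phase of `d i`.
  set p : Fin n → ℂ := fun i => Complex.exp (((-(d i).arg / 2 : ℝ) : ℂ) * Complex.I) with hp
  have hp1 : ∀ i, star (p i) * p i = 1 := by
    intro i
    rw [Complex.star_def, ← Complex.normSq_eq_conj_mul_self, Complex.normSq_eq_norm_sq, hp]
    simp only [Complex.norm_exp_ofReal_mul_I]
    simp
  have hp2 : ∀ i, p i * d i * p i = (‖d i‖ : ℂ) := by
    intro i
    conv_lhs => rw [← Complex.norm_mul_exp_arg_mul_I (d i)]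
    rw [mul_comm (‖d i‖ : ℂ), ← mul_assoc, mul_assoc, mul_comm (‖d i‖ : ℂ), ← mul_assoc, hp]
    simp only
    rw [← Complex.exp_add, ← Complex.exp_add]
    convert one_mul _
    rw [Complex.exp_eq_one_iff]
    exact ⟨0, by push_cast; ring⟩
  refine ⟨V * R * diagonal p, fun i => ‖d i‖, ?_, fun i => norm_nonneg _, ?_⟩
  · calc (V * R * diagonal p)ᴴ * (V * R * diagonal p)
        = (diagonal p)ᴴ * (Rᴴ * (Vᴴ * V) * R) * diagonal p := by
          simp only [conjTranspose_mul, Matrix.mul_assoc]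
      _ = 1 := by
          rw [hV, Matrix.mul_one, hRH, hRR, Matrix.mul_one, diagonal_conjTranspose,
            diagonal_mul_diagonal, ← diagonal_one]
          exact congrArg diagonal (funext hp1)
  · calc (V * R * diagonal p)ᵀ * A * (V * R * diagonal p)
        = (diagonal p)ᵀ * (Rᵀ * (Vᵀ * A * V) * R) * diagonal p := by
          simp only [transpose_mul, Matrix.mul_assoc]
      _ = _ := by
          rw [hRB, diagonal_transpose, diagonal_mul_diagonal, diagonal_mul_diagonal]
          exact congrArg diagonal (funext hp2)

theorem charpoly_mul_conj_of_takagi {n : ℕ} {A U : Matrix (Fin n) (Fin n) ℂ} {b : Fin n → ℝ}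
    (hU : Uᴴ * U = 1) (hUA : Uᵀ * A * U = diagonal (fun i => (b i : ℂ))) :
    (A * A.map (starRingEnd ℂ)).charpoly
      = ∏ i, (Polynomial.X - Polynomial.C ((b i : ℂ) ^ 2)) := by
  set W := U.map (starRingEnd ℂ) with hW
  set D : Matrix (Fin n) (Fin n) ℂ := diagonal (fun i => (b i : ℂ)) with hD
  have hWT : Wᵀ = Uᴴ := rfl
  have hUW : Uᵀ * W = 1 := by
    have h := congrArg transpose hU
    rwa [transpose_mul, ← hWT, transpose_transpose, transpose_one] at h
  have hUU : U * Wᵀ = 1 := mul_eq_one_comm.mp hU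
  have hWU : W * Uᵀ = 1 := mul_eq_one_comm.mp hUW
  have hA : A = W * D * Wᵀ := by
    rw [← hUA]
    calc A = (W * Uᵀ) * A * (U * Wᵀ) := by rw [hWU, hUU, Matrix.one_mul, Matrix.mul_one]
      _ = _ := by simp only [Matrix.mul_assoc]
  have hA' : A.map (starRingEnd ℂ) = U * D * Uᵀ := by
    have hDc : D.map (starRingEnd ℂ) = D := by
      rw [hD, diagonal_map (by simp)]; simp
    have hWc : W.map (starRingEnd ℂ) = U := by ext i j; simp [hW]
    conv_lhs => rw [hA]
    rw [Matrix.map_mul, Matrix.map_mul, hDc, transpose_map, hWc]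
  have hAA : A * A.map (starRingEnd ℂ) = W * (D * D * Uᵀ) := by
    have hWU' : Wᵀ * U = 1 := hU
    rw [hA']
    conv_lhs => rw [hA]
    calc W * D * Wᵀ * (U * D * Uᵀ) = W * D * (Wᵀ * U) * D * Uᵀ := by
          simp only [Matrix.mul_assoc]
      _ = _ := by rw [hWU', Matrix.mul_one]; simp only [Matrix.mul_assoc]
  rw [hAA, charpoly_mul_comm, Matrix.mul_assoc, hUW, Matrix.mul_one, hD, diagonal_mul_diagonal,
    charpoly_diagonal]
  simp only [sq]

/-- Chern's lemma (Autonne–Takagi): a symmetric complex matrix `A` can be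
written as `Uᵀ·A·U = diag(b₁, …, bₙ)` with `U` unitary and
`b₁ ≥ … ≥ bₙ ≥ 0`; moreover `b₁², …, bₙ²` are exactly the eigenvalues
(with multiplicity) of `A·Ā`. -/
theorem stmt_9 (n : ℕ) (A : Matrix (Fin n) (Fin n) ℂ) (hA : A.transpose = A) :
    ∃ (U : Matrix (Fin n) (Fin n) ℂ) (b : Fin n → ℝ),
      U.conjTranspose * U = 1 ∧
      (∀ i j : Fin n, i ≤ j → b j ≤ b i) ∧
      (∀ i, 0 ≤ b i) ∧
      U.transpose * A * U = Matrix.diagonal (fun i => (b i : ℂ)) ∧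
      (A * A.map (starRingEnd ℂ)).charpoly
        = ∏ i, (Polynomial.X - Polynomial.C ((b i : ℂ) ^ 2)) := by
  obtain ⟨U, b, hU, hb, hUA⟩ := exists_takagi_unsorted A hA
  -- `Tuple.sort` sorts increasingly, so it is applied to `-b`.
  set σ : Equiv.Perm (Fin n) := Tuple.sort (fun i => -b i) with hσ
  have hmono : Monotone ((fun i => -b i) ∘ σ) := Tuple.monotone_sort _
  have hU' : (U.submatrix id σ)ᴴ * U.submatrix id σ = 1 := by
    rw [conjTranspose_submatrix, ← submatrix_mul _ _ _ _ _ Function.bijective_id, hU,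
      submatrix_one_equiv]
  have hUA' : (U.submatrix id σ)ᵀ * A * U.submatrix id σ
      = diagonal (fun i => (b (σ i) : ℂ)) := by
    have h := congrArg (fun M => M.submatrix σ σ) hUA
    simp only [submatrix_diagonal_equiv] at h
    rw [submatrix_mul _ _ _ _ _ Function.bijective_id,
      submatrix_mul _ _ _ _ _ Function.bijective_id] at h
    simpa [Function.comp_def] using h
  exact ⟨U.submatrix id σ, fun i => b (σ i), hU', fun i j hij => neg_le_neg_iff.mp (hmono hij),
    fun i => hb _, hUA', charpoly_mul_conj_of_takagi hU' hUA'⟩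
end

section
/- With the setup in the context (a complex Lie algebra 𝔥 with 2n linearly independent vectors e₁,…,eₙ,ē₁,…,ēₙ whose brackets are encoded by structure constants C and D), the Jacobi identity implies: for all 1 ≤ i, j, k, ℓ ≤ n, ∑_{r=1}^n ( C^r_{ik}·conj(D^r_{jℓ}) − C^j_{rk}·conj(D^i_{rℓ}) + C^j_{ri}·conj(D^k_{rℓ}) − D^ℓ_{ri}·conj(D^k_{jr}) + D^ℓ_{rk}·conj(D^i_{jr}) ) = 0. -/
/-!
The identity is the `e j`-coordinate of the Jacobi identity for `ebar ℓ`, `e i`, `e k`.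
Linear independence of the `e`'s and `ebar`'s supplies the corresponding coordinate functional
on the whole Lie algebra (`exists_coord_functional`), and evaluating it on
`⁅ebar ℓ, ⁅e i, e k⁆⁆ = ⁅⁅ebar ℓ, e i⁆, e k⁆ + ⁅e i, ⁅ebar ℓ, e k⁆⁆` yields, term by term, the five
products of structure constants.
-/

theorem exists_coord_functional {ι V : Type*} [DecidableEq ι] [AddCommGroup V] [Module ℂ V]
    {v : ι → V} (hv : LinearIndependent ℂ v) (a : ι) :
    ∃ φ : V →ₗ[ℂ] ℂ, ∀ b, φ (v b) = if b = a then 1 else 0 := by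
  obtain ⟨g, hg⟩ := LinearMap.exists_leftInverse_of_injective
    (Finsupp.linearCombination ℂ v) (LinearMap.ker_eq_bot.mpr hv)
  refine ⟨(Finsupp.lapply a).comp g, fun b => ?_⟩
  have h := LinearMap.congr_fun hg (Finsupp.single b 1)
  simp only [LinearMap.comp_apply, Finsupp.linearCombination_single, one_smul,
    LinearMap.id_apply] at h
  simp [h, Finsupp.single_apply]

/-- Third component form of the first Bianchi identity: with structure
constants `C`, `D` as in the setup, the Jacobi identity gives
`∑ᵣ (C^r_{ik}·conj(D^r_{jℓ}) − C^j_{rk}·conj(D^i_{rℓ}) + C^j_{ri}·conj(D^k_{rℓ})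
 − D^ℓ_{ri}·conj(D^k_{jr}) + D^ℓ_{rk}·conj(D^i_{jr})) = 0`. -/
theorem stmt_12 (n : ℕ) (𝔥 : Type*) [LieRing 𝔥] [LieAlgebra ℂ 𝔥]
    (e ebar : Fin n → 𝔥)
    (hindep : LinearIndependent ℂ (Sum.elim e ebar))
    (C D : Fin n → Fin n → Fin n → ℂ)
    (hee : ∀ i k, ⁅e i, e k⁆ = ∑ j, C j i k • e j)
    (hbb : ∀ i k, ⁅ebar i, ebar k⁆ = ∑ j, (starRingEnd ℂ) (C j i k) • ebar j)
    (hbe : ∀ j k, ⁅ebar j, e k⁆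
      = ∑ i, (D j i k • ebar i - (starRingEnd ℂ) (D k i j) • e i)) :
    ∀ i j k ℓ : Fin n,
      ∑ r, (C r i k * (starRingEnd ℂ) (D r j ℓ)
          - C j r k * (starRingEnd ℂ) (D i r ℓ)
          + C j r i * (starRingEnd ℂ) (D k r ℓ)
          - D ℓ r i * (starRingEnd ℂ) (D k j r)
          + D ℓ r k * (starRingEnd ℂ) (D i j r)) = 0 := by
  intro i j k ℓ
  obtain ⟨φ, hφ⟩ := exists_coord_functional hindep (Sum.inl j)
  have he : ∀ m, φ (e m) = if m = j then 1 else 0 := fun m => by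
    simpa using hφ (Sum.inl m)
  have hb : ∀ m, φ (ebar m) = 0 := fun m => by
    simpa using hφ (Sum.inr m)
  have φee : ∀ p q, φ ⁅e p, e q⁆ = C j p q := fun p q => by
    simp [hee, he]
  have φbe : ∀ p q, φ ⁅ebar p, e q⁆ = -(starRingEnd ℂ) (D q j p) := fun p q => by
    simp [hbe, he, hb]
  have h₁ : φ ⁅ebar ℓ, ⁅e i, e k⁆⁆ = ∑ r, C r i k * -(starRingEnd ℂ) (D r j ℓ) := by
    simp only [hee, lie_sum, lie_smul, map_sum, map_smul, φbe, smul_eq_mul]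
  have h₂ : ∀ p q, φ ⁅⁅ebar ℓ, e p⁆, e q⁆
      = ∑ r, (D ℓ r p * -(starRingEnd ℂ) (D q j r) - (starRingEnd ℂ) (D p r ℓ) * C j r q) :=
    fun p q => by
      rw [hbe ℓ p]
      simp only [sum_lie, sub_lie, smul_lie, map_sum, map_sub, map_smul, φbe, φee,
        smul_eq_mul]
  have jac := congrArg φ (leibniz_lie (ebar ℓ) (e i) (e k))
  rw [← lie_skew (e i) ⁅ebar ℓ, e k⁆, map_add, map_neg, h₁, h₂, h₂, ← sub_eq_zero,
    ← sub_eq_add_neg, ← Finset.sum_sub_distrib, ← Finset.sum_sub_distrib] at jac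
  rw [← neg_eq_zero, ← jac, ← Finset.sum_neg_distrib]
  exact Finset.sum_congr rfl fun r _ => by ring
end
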